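/- Let r : (−∞,b̃) → ℝ be smooth and satisfy Setting RS, i.e. for every z < b̃: r(z) > 0, 0 < r'(z) ≤ 1/√2 and r(z)·r''(z) > 2·r'(z)²·(r'(z)²+1). Define G(z) = r'(z)/(r(z)·(r'(z)²+1)). Then G'(z) = ( r(z)r''(z)(1−r'(z)²) − r'(z)²(r'(z)²+1) ) / ( r(z)²(r'(z)²+1)² ) and G'(z) > 0 for every z < b̃; in particular G is strictly increasing on (−∞,b̃). -/

import Mathlib

/-!
The quotient rule gives the numerator `a (1 - p²) - p² (p² + 1)` for `G'`, where `p = r'` and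
`a = r r''`. The slope bound says exactly that `1 - p² ≥ 1 / 2`, so the factor `2` in
`a > 2 p² (p² + 1)` is what makes this numerator positive.
-/

/-- The rate at which the height `z` of a parallel circle changes under curve shortening flow on the
surface of revolution of profile `r`: its geodesic curvature `r' / (r √(r'² + 1))` times the factor
`1 / √(r'² + 1)` converting meridian arc length to height, up to the sign fixed by the choice of
normal. The slope `r'` is a separate argument, so that it need not be `deriv r` everywhere. -/
noncomputable def parallelSpeed (r r' : ℝ → ℝ) (z : ℝ) : ℝ :=
  r' z / (r z * (r' z ^ 2 + 1))

theorem hasDerivAt_parallelSpeed {r r' : ℝ → ℝ} {r'' z : ℝ} (hr : HasDerivAt r (r' z) z)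
    (hr' : HasDerivAt r' r'' z) (hz : r z ≠ 0) :
    HasDerivAt (parallelSpeed r r')
      ((r z * r'' * (1 - r' z ^ 2) - r' z ^ 2 * (r' z ^ 2 + 1)) /
        (r z ^ 2 * (r' z ^ 2 + 1) ^ 2)) z := by
  have hden : r z * (r' z ^ 2 + 1) ≠ 0 := mul_ne_zero hz (by positivity)
  refine (hr'.fun_div (hr.fun_mul ((hr'.fun_pow 2).add_const 1)) hden).congr_deriv ?_
  rw [mul_pow]
  congr 1
  push_cast
  ring

theorem sq_le_half_of_abs_le {p : ℝ} (hp : |p| ≤ 1 / √2) : p ^ 2 ≤ 1 / 2 :=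
  calc p ^ 2 = |p| ^ 2 := (sq_abs p).symm
    _ ≤ (1 / √2) ^ 2 := by gcongr
    _ = 1 / 2 := by rw [div_pow, one_pow, Real.sq_sqrt zero_le_two]

theorem sq_mul_lt_mul_one_sub_sq {p a : ℝ} (hp : p ^ 2 ≤ 1 / 2)
    (ha : 2 * p ^ 2 * (p ^ 2 + 1) < a) : p ^ 2 * (p ^ 2 + 1) < a * (1 - p ^ 2) :=
  calc p ^ 2 * (p ^ 2 + 1) = 2 * p ^ 2 * (p ^ 2 + 1) * (1 / 2) := by ring
    _ ≤ 2 * p ^ 2 * (p ^ 2 + 1) * (1 - p ^ 2) := by gcongr; linarith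
    _ < a * (1 - p ^ 2) := by gcongr; linarith

theorem G_strictMono_general {r r' r'' : ℝ → ℝ} {s : Set ℝ} (hs : Convex ℝ s)
    (hr : ∀ z ∈ s, HasDerivAt r (r' z) z) (hr' : ∀ z ∈ s, HasDerivAt r' (r'' z) z)
    (hslope : ∀ z ∈ s, |r' z| ≤ 1 / √2)
    (hrr : ∀ z ∈ s, 2 * r' z ^ 2 * (r' z ^ 2 + 1) < r z * r'' z) :
    (∀ z ∈ s,
      deriv (parallelSpeed r r') z =
        (r z * r'' z * (1 - r' z ^ 2) - r' z ^ 2 * (r' z ^ 2 + 1)) /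
          (r z ^ 2 * (r' z ^ 2 + 1) ^ 2) ∧
      0 < deriv (parallelSpeed r r') z) ∧
    StrictMonoOn (parallelSpeed r r') s := by
  have r_ne_zero : ∀ z ∈ s, r z ≠ 0 := fun z hz => by
    have hpos : 0 < r z * r'' z := lt_of_le_of_lt (by positivity) (hrr z hz)
    exact left_ne_zero_of_mul hpos.ne'
  have hasDerivAt_speed := fun z hz =>
    hasDerivAt_parallelSpeed (hr z hz) (hr' z hz) (r_ne_zero z hz)
  have deriv_pos : ∀ z ∈ s, 0 < deriv (parallelSpeed r r') z := fun z hz => by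
    have hne := r_ne_zero z hz
    have hnum := sq_mul_lt_mul_one_sub_sq (sq_le_half_of_abs_le (hslope z hz)) (hrr z hz)
    rw [(hasDerivAt_speed z hz).deriv]
    exact div_pos (sub_pos.2 hnum) (by positivity)
  exact ⟨fun z hz => ⟨(hasDerivAt_speed z hz).deriv, deriv_pos z hz⟩,
    strictMonoOn_of_deriv_pos hs (HasDerivAt.continuousOn hasDerivAt_speed)
      fun z hz => deriv_pos z (interior_subset hz)⟩

/-- Under Setting RS on `(−∞, b̃)` (i.e. `r > 0`, `0 < r' ≤ 1/√2` and
`r r'' > 2 r'² (r'²+1)` there), the function `G(z) = r'(z)/(r(z)(r'(z)²+1))` has derivative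
`G'(z) = ( r r'' (1−r'²) − r'² (r'²+1) ) / ( r² (r'²+1)² ) > 0` at every `z < b̃`;
in particular `G` is strictly increasing on `(−∞, b̃)`. -/
theorem G_strictMono (r : ℝ → ℝ) (btilde : ℝ)
    (hr : ContDiffOn ℝ (⊤ : ℕ∞) r (Set.Iio btilde))
    (hRS : ∀ z < btilde, 0 < r z ∧ (0 < deriv r z ∧ deriv r z ≤ 1 / Real.sqrt 2) ∧
      r z * deriv (deriv r) z > 2 * (deriv r z) ^ 2 * ((deriv r z) ^ 2 + 1)) :
    let G : ℝ → ℝ := fun z => deriv r z / (r z * ((deriv r z) ^ 2 + 1))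
    (∀ z < btilde,
      deriv G z = (r z * deriv (deriv r) z * (1 - (deriv r z) ^ 2)
            - (deriv r z) ^ 2 * ((deriv r z) ^ 2 + 1))
          / ((r z) ^ 2 * ((deriv r z) ^ 2 + 1) ^ 2) ∧
      0 < deriv G z) ∧
    StrictMonoOn G (Set.Iio btilde) := by
  have hr' : ContDiffOn ℝ 1 (deriv r) (Set.Iio btilde) :=
    hr.deriv_of_isOpen isOpen_Iio (by norm_cast)
  exact G_strictMono_general (convex_Iio btilde)
    (fun z hz => (hr.differentiableOn (by simp)).hasDerivAt (Iio_mem_nhds hz))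
    (fun z hz => (hr'.differentiableOn one_ne_zero).hasDerivAt (Iio_mem_nhds hz))
    (fun z hz => (abs_of_pos (hRS z hz).2.1.1).trans_le (hRS z hz).2.1.2)
    (fun z hz => (hRS z hz).2.2)
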